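/- arXiv:2411.04031 — 4 statements merged into one kernel-verified Lean document; each statement's English description precedes it below -/
import Mathlib

section
/- (Normal form) For every formula φ of L_⟹, if R(φ) = {α₁,…,αₙ} is the set of resolutions of φ, then φ is logically equivalent to the inquisitive disjunction α₁ ⩔ … ⩔ αₙ. -/
/-- Formulas of the inquisitive modal language `L_⟹`. -/
inductive Form (P : Type) : Type
  | atom : P → Form P
  | bot : Form P
  | and : Form P → Form P → Form P
  | impl : Form P → Form P → Form P
  | idisj : Form P → Form P → Form P
  | yields : Form P → Form P → Form P

/-- An inhabited neighborhood model (in-model). -/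
structure InModel (P : Type) where
  W : Type
  ne : Nonempty W
  Nb : W → Set (Set W)
  nb_nonempty : ∀ w, ∀ s ∈ Nb w, s.Nonempty
  V : W → P → Bool

/-- Support of a formula at an information state. -/
def support {P : Type} (M : InModel P) : Form P → Set M.W → Prop
  | .atom p, s => ∀ w ∈ s, M.V w p = true
  | .bot, s => s = ∅
  | .and φ ψ, s => support M φ s ∧ support M ψ s
  | .impl φ ψ, s => ∀ t : Set M.W, t ⊆ s → support M φ t → support M ψ t
  | .idisj φ ψ, s => support M φ s ∨ support M ψ s
  | .yields φ ψ, s => ∀ w ∈ s, ∀ t ∈ M.Nb w, support M φ t → support M ψ t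

/-- Truth at a world: support at the corresponding singleton state. -/
def truth {P : Type} (M : InModel P) (w : M.W) (φ : Form P) : Prop :=
  support M φ {w}

/-- A formula is truth-conditional if support at any state amounts to truth at
every world of the state. -/
def TruthConditional {P : Type} (φ : Form P) : Prop :=
  ∀ (M : InModel P) (s : Set M.W), support M φ s ↔ ∀ w ∈ s, truth M w φ

/-- Logical equivalence: same supporting states in every in-model. -/
def EquivF {P : Type} (φ ψ : Form P) : Prop :=
  ∀ (M : InModel P) (s : Set M.W), support M φ s ↔ support M ψ s

def Form.neg {P : Type} (φ : Form P) : Form P := .impl φ .bot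
def Form.top {P : Type} : Form P := Form.neg .bot
def Form.or {P : Type} (φ ψ : Form P) : Form P := Form.neg (.and (Form.neg φ) (Form.neg ψ))
def Form.box {P : Type} (φ : Form P) : Form P := .yields Form.top φ
def Form.dia {P : Type} (φ : Form P) : Form P := Form.neg (.yields φ .bot)
def Form.quest {P : Type} (φ : Form P) : Form P := .idisj φ (Form.neg φ)

/-- Declaratives: formulas where `⩔` occurs only within the scope of `⟹`. -/
inductive IsDecl {P : Type} : Form P → Prop
  | atom (p : P) : IsDecl (.atom p)
  | bot : IsDecl .bot
  | and {α β : Form P} : IsDecl α → IsDecl β → IsDecl (.and α β)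
  | impl {α β : Form P} : IsDecl α → IsDecl β → IsDecl (.impl α β)
  | yields (φ ψ : Form P) : IsDecl (.yields φ ψ)

def bigAnd {P : Type} : List (Form P) → Form P
  | [] => Form.top
  | [φ] => φ
  | φ :: rest => .and φ (bigAnd rest)

def bigIdisj {P : Type} : List (Form P) → Form P
  | [] => .bot
  | [φ] => φ
  | φ :: rest => .idisj φ (bigIdisj rest)

/-- All ways of choosing one element from each list in a list of lists. -/
def choices {α : Type} : List (List α) → List (List α)
  | [] => [[]]
  | l :: ls => l.flatMap (fun a => (choices ls).map (fun c => a :: c))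

/-- The resolutions of a formula (as a list). -/
def res {P : Type} : Form P → List (Form P)
  | .atom p => [.atom p]
  | .bot => [.bot]
  | .yields φ ψ => [.yields φ ψ]
  | .and φ ψ =>
      let rφ := res φ; let rψ := res ψ
      rφ.flatMap (fun a => rψ.map (fun b => .and a b))
  | .idisj φ ψ => res φ ++ res ψ
  | .impl φ ψ =>
      let rφ := res φ; let rψ := res ψ
      (choices (rφ.map (fun a => rψ.map (fun b => Form.impl a b)))).map bigAnd

/-! A resolution contains `⩔` only below `⟹`, so it is truth-conditional: its support is determined
pointwise. An implication whose antecedent `α` is truth-conditional merely restricts the state to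
the worlds where `α` is true, and the single restricted state that remains has to support one fixed
resolution of the consequent. Hence such an implication distributes over the resolutions of its
consequent, which is exactly how the resolutions of an implication are built. -/

section ListChoice

variable {α : Type} {p : α → Prop} {L : List (List α)}

theorem exists_mem_choices_forall_iff :
    (∃ c ∈ choices L, ∀ x ∈ c, p x) ↔ ∀ l ∈ L, ∃ x ∈ l, p x := by
  induction L with
  | nil => simp [choices]
  | cons l L ih =>
    rw [List.forall_mem_cons, ← ih]
    simp only [choices, List.mem_flatMap, List.mem_map]
    constructor
    · rintro ⟨_, ⟨a, ha, c, hc, rfl⟩, h⟩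
      obtain ⟨hpa, hpc⟩ := List.forall_mem_cons.mp h
      exact ⟨⟨a, ha, hpa⟩, c, hc, hpc⟩
    · rintro ⟨⟨a, ha, hpa⟩, c, hc, hpc⟩
      exact ⟨a :: c, ⟨a, ha, c, hc, rfl⟩, List.forall_mem_cons.mpr ⟨hpa, hpc⟩⟩

theorem exists_mem_of_mem_choices {c : List α} (hc : c ∈ choices L) {x : α} (hx : x ∈ c) :
    ∃ l ∈ L, x ∈ l := by
  induction L generalizing c with
  | nil => simp_all [choices]
  | cons l L ih =>
    simp only [choices, List.mem_flatMap, List.mem_map] at hc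
    obtain ⟨a, ha, c, hc, rfl⟩ := hc
    rcases List.mem_cons.mp hx with rfl | hx
    · exact ⟨l, List.mem_cons_self, ha⟩
    · obtain ⟨k, hk, hxk⟩ := ih hc hx
      exact ⟨k, List.mem_cons_of_mem l hk, hxk⟩

end ListChoice

section Support

variable {P : Type} {M : InModel P} {s t : Set M.W} {φ ψ : Form P}

theorem support_mono (hts : t ⊆ s) (h : support M φ s) : support M φ t := by
  induction φ with
  | atom p => exact fun w hw => h w (hts hw)
  | bot => exact Set.subset_eq_empty hts h
  | and φ ψ ihφ ihψ => exact ⟨ihφ h.1, ihψ h.2⟩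
  | impl φ ψ => exact fun u hu => h u (hu.trans hts)
  | idisj φ ψ ihφ ihψ => exact h.imp ihφ ihψ
  | yields φ ψ => exact fun w hw => h w (hts hw)

theorem support_empty (φ : Form P) : support M φ ∅ := by
  induction φ with
  | atom p => exact fun w hw => hw.elim
  | bot => rfl
  | and φ ψ ihφ ihψ => exact ⟨ihφ, ihψ⟩
  | impl φ ψ _ ihψ => exact fun t ht _ => support_mono ht ihψ
  | idisj φ ψ ihφ _ => exact .inl ihφ
  | yields φ ψ => exact fun w hw => hw.elim

theorem support_bigAnd {l : List (Form P)} :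
    support M (bigAnd l) s ↔ ∀ φ ∈ l, support M φ s := by
  induction l using bigAnd.induct with
  | case1 => simp [bigAnd, Form.top, Form.neg, support]
  | case2 φ => simp [bigAnd]
  | case3 φ l hl ih => rw [bigAnd.eq_3 _ _ hl, List.forall_mem_cons, ← ih, support]

-- The empty state is listed separately because the empty disjunction is `⊥`, which it supports.
theorem support_bigIdisj {l : List (Form P)} :
    support M (bigIdisj l) s ↔ s = ∅ ∨ ∃ φ ∈ l, support M φ s := by
  induction l using bigIdisj.induct with
  | case1 => simp [bigIdisj, support]
  | case2 φ =>
    have empty_imp : s = ∅ → support M φ s := by rintro rfl; exact support_empty φ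
    simpa [bigIdisj] using empty_imp
  | case3 φ l hl ih =>
    rw [bigIdisj.eq_3 _ _ hl, List.exists_mem_cons_iff, or_left_comm, ← ih, support]

end Support

section TruthConditional

variable {P : Type} {φ ψ : Form P}

/-- The truth set `|φ|` of a formula: the worlds of the model at which it is true. -/
def truthSet (M : InModel P) (φ : Form P) : Set M.W :=
  {w | truth M w φ}

theorem support_subset_truthSet {M : InModel P} {s : Set M.W} (h : support M φ s) :
    s ⊆ truthSet M φ :=
  fun _ hw => support_mono (Set.singleton_subset_iff.mpr hw) h

theorem truthConditional_iff :
    TruthConditional φ ↔ ∀ M : InModel P, ∀ s ⊆ truthSet M φ, support M φ s :=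
  ⟨fun h M s => (h M s).mpr, fun h M s => ⟨support_subset_truthSet, h M s⟩⟩

theorem TruthConditional.support_iff (hφ : TruthConditional φ) {M : InModel P} {s : Set M.W} :
    support M φ s ↔ s ⊆ truthSet M φ :=
  hφ M s

theorem IsDecl.truthConditional (hφ : IsDecl φ) : TruthConditional φ := by
  rw [truthConditional_iff]
  intro M
  induction hφ with
  | atom p => exact fun s h w hw => h hw w rfl
  | bot =>
    exact fun s h => Set.eq_empty_of_forall_notMem fun w hw => Set.singleton_ne_empty w (h hw)
  | and _ _ ihα ihβ =>
    exact fun s h => ⟨ihα s fun w hw => (h hw).1, ihβ s fun w hw => (h hw).2⟩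
  | impl _ _ _ ihβ =>
    exact fun s h t hts hα => ihβ t fun w hw =>
      h (hts hw) {w} subset_rfl (support_subset_truthSet hα hw)
  | yields φ ψ => exact fun s h w hw => h hw w rfl

theorem TruthConditional.support_impl_iff (hφ : TruthConditional φ) {M : InModel P}
    {s : Set M.W} : support M (.impl φ ψ) s ↔ support M ψ (s ∩ truthSet M φ) := by
  constructor
  · exact fun h => h _ Set.inter_subset_left (hφ.support_iff.mpr Set.inter_subset_right)
  · exact fun h t hts ht => support_mono (Set.subset_inter hts (support_subset_truthSet ht)) h

end TruthConditional

section Resolutions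

variable {P : Type} {φ ψ α : Form P} {M : InModel P} {s : Set M.W}

theorem isDecl_bigAnd {l : List (Form P)} (hl : ∀ α ∈ l, IsDecl α) : IsDecl (bigAnd l) := by
  induction l using bigAnd.induct with
  | case1 => exact .impl .bot .bot
  | case2 α => exact hl α List.mem_cons_self
  | case3 α l hne ih =>
    obtain ⟨hα, hl⟩ := List.forall_mem_cons.mp hl
    rw [bigAnd.eq_3 _ _ hne]
    exact .and hα (ih hl)

theorem mem_res_and : α ∈ res (.and φ ψ) ↔ ∃ β ∈ res φ, ∃ γ ∈ res ψ, .and β γ = α := by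
  simp only [res, List.mem_flatMap, List.mem_map]

theorem isDecl_of_mem_res (hα : α ∈ res φ) : IsDecl α := by
  induction φ generalizing α with
  | atom p => exact List.mem_singleton.mp hα ▸ .atom p
  | bot => exact List.mem_singleton.mp hα ▸ .bot
  | and φ ψ ihφ ihψ =>
    obtain ⟨β, hβ, γ, hγ, rfl⟩ := mem_res_and.mp hα
    exact .and (ihφ hβ) (ihψ hγ)
  | impl φ ψ ihφ ihψ =>
    obtain ⟨c, hc, rfl⟩ := List.mem_map.mp hα
    refine isDecl_bigAnd fun δ hδ => ?_
    obtain ⟨l, hl, hδl⟩ := exists_mem_of_mem_choices hc hδ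
    obtain ⟨β, hβ, rfl⟩ := List.mem_map.mp hl
    obtain ⟨γ, hγ, rfl⟩ := List.mem_map.mp hδl
    exact .impl (ihφ hβ) (ihψ hγ)
  | idisj φ ψ ihφ ihψ => exact (List.mem_append.mp hα).elim ihφ ihψ
  | yields φ ψ => exact List.mem_singleton.mp hα ▸ .yields φ ψ

theorem exists_mem_res_and_support_iff :
    (∃ α ∈ res (.and φ ψ), support M α s) ↔
      (∃ β ∈ res φ, support M β s) ∧ ∃ γ ∈ res ψ, support M γ s := by
  simp only [mem_res_and]
  constructor
  · rintro ⟨_, ⟨β, hβ, γ, hγ, rfl⟩, hβs, hγs⟩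
    exact ⟨⟨β, hβ, hβs⟩, γ, hγ, hγs⟩
  · rintro ⟨⟨β, hβ, hβs⟩, γ, hγ, hγs⟩
    exact ⟨_, ⟨β, hβ, γ, hγ, rfl⟩, hβs, hγs⟩

theorem exists_mem_res_impl_support_iff :
    (∃ α ∈ res (.impl φ ψ), support M α s) ↔
      ∀ β ∈ res φ, ∃ γ ∈ res ψ, support M (.impl β γ) s := by
  simp only [res, List.mem_map, exists_exists_and_eq_and, support_bigAnd,
    exists_mem_choices_forall_iff, forall_exists_index, and_imp, forall_apply_eq_imp_iff₂]

theorem support_iff_exists_mem_res : support M φ s ↔ ∃ α ∈ res φ, support M α s := by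
  induction φ generalizing s with
  | atom p => simp [res]
  | bot => simp [res]
  | and φ ψ ihφ ihψ => rw [exists_mem_res_and_support_iff, ← ihφ, ← ihψ, support]
  | impl φ ψ ihφ ihψ =>
    calc support M (.impl φ ψ) s
      _ ↔ ∀ β ∈ res φ, support M (.impl β ψ) s := by
        simp only [support, ihφ]
        exact ⟨fun h β hβ t hts ht => h t hts ⟨β, hβ, ht⟩,
          fun h t hts ⟨β, hβ, ht⟩ => h β hβ t hts ht⟩
      _ ↔ ∀ β ∈ res φ, ∃ γ ∈ res ψ, support M (.impl β γ) s := by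
        refine forall₂_congr fun β hβ => ?_
        have hβ_tc : TruthConditional β := (isDecl_of_mem_res hβ).truthConditional
        simp only [hβ_tc.support_impl_iff, ihψ]
      _ ↔ ∃ α ∈ res (.impl φ ψ), support M α s := exists_mem_res_impl_support_iff.symm
  | idisj φ ψ ihφ ihψ =>
    simp only [support, ihφ, ihψ, res, List.mem_append, or_and_right, exists_or]
  | yields φ ψ => simp [res]

end Resolutions

/-- normal form — every formula is equivalent to the inquisitive
disjunction of its resolutions. -/
theorem normal_form {P : Type} (φ : Form P) : EquivF φ (bigIdisj (res φ)) := by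
  intro M s
  have support_of_empty : s = ∅ → support M φ s := by
    rintro rfl
    exact support_empty φ
  rw [support_bigIdisj, ← support_iff_exists_mem_res, or_iff_right_of_imp support_of_empty]
end

section
/- Every declarative formula of the fragment L_⟐ (the language with the unary modality ⟐ in place of ⟹, in which ⩔ occurs only within the scope of ⟐) is logically equivalent to a ⩔-free formula of L_⟐. -/
/-- The fragment `L_⟐`: formulas built from atoms, `⊥`, `∧`, `→`, `⩔` and the
defined modality `⟐`. -/
inductive InLdia {P : Type} : Form P → Prop
  | atom (p : P) : InLdia (.atom p)
  | bot : InLdia .bot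
  | and {φ ψ : Form P} : InLdia φ → InLdia ψ → InLdia (.and φ ψ)
  | impl {φ ψ : Form P} : InLdia φ → InLdia ψ → InLdia (.impl φ ψ)
  | idisj {φ ψ : Form P} : InLdia φ → InLdia ψ → InLdia (.idisj φ ψ)
  | dia {φ : Form P} : InLdia φ → InLdia (Form.dia φ)

/-- Declaratives of `L_⟐`: `⩔` occurs only within the scope of `⟐`. -/
inductive DeclDia {P : Type} : Form P → Prop
  | atom (p : P) : DeclDia (.atom p)
  | bot : DeclDia .bot
  | and {α β : Form P} : DeclDia α → DeclDia β → DeclDia (.and α β)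
  | impl {α β : Form P} : DeclDia α → DeclDia β → DeclDia (.impl α β)
  | dia {φ : Form P} : InLdia φ → DeclDia (Form.dia φ)

/-- `⩔`-free formulas of `L_⟐`. -/
inductive NoIdisjDia {P : Type} : Form P → Prop
  | atom (p : P) : NoIdisjDia (.atom p)
  | bot : NoIdisjDia .bot
  | and {φ ψ : Form P} : NoIdisjDia φ → NoIdisjDia ψ → NoIdisjDia (.and φ ψ)
  | impl {φ ψ : Form P} : NoIdisjDia φ → NoIdisjDia ψ → NoIdisjDia (.impl φ ψ)
  | dia {φ : Form P} : NoIdisjDia φ → NoIdisjDia (Form.dia φ)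

/-!
Every formula of `L_⟐` is equivalent to a `⩔` of `⩔`-free formulas, because `⩔` can be pulled out of
each connective. It distributes over `∧`; in an antecedent it turns into a conjunction of
implications; it moves out of the consequent of `α → (φ ⩔ ψ)` for truth-conditional `α`, since then
support of `α → φ` at `s` is support of `φ` at the largest substate of `s` supporting `α`; and `⟐`
turns it into classical disjunction. At single worlds `⩔` and classical disjunction agree, so
replacing the remaining `⩔` by classical disjunction preserves truth, hence also support as soon as
the formula is truth-conditional.
-/

variable {P : Type} {M : InModel P} {w : M.W} {s : Set M.W} {α φ φ' ψ ψ' χ : Form P}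

theorem support_antitone (M : InModel P) (φ : Form P) : Antitone (support M φ) := by
  induction φ with
  | atom p => exact fun t s hts hs w hw => hs w (hts hw)
  | bot => exact fun t s hts hs => Set.subset_eq_empty hts hs
  | and φ ψ ihφ ihψ => exact fun t s hts hs => ⟨ihφ hts hs.1, ihψ hts hs.2⟩
  | impl φ ψ _ _ => exact fun t s hts hs u hut => hs u (hut.trans hts)
  | idisj φ ψ ihφ ihψ => exact fun t s hts hs => hs.imp (ihφ hts) (ihψ hts)
  | yields φ ψ _ _ => exact fun t s hts hs w hw => hs w (hts hw)

theorem support.truth (h : support M φ s) (hw : w ∈ s) : truth M w φ :=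
  support_antitone M φ (Set.singleton_subset_iff.2 hw) h

theorem support_neg : support M φ.neg s ↔ ∀ w ∈ s, ¬ truth M w φ := by
  constructor
  · intro h w hw hφ
    exact Set.singleton_ne_empty w (h {w} (Set.singleton_subset_iff.2 hw) hφ)
  · intro h t hts hφ
    exact Set.eq_empty_of_forall_notMem fun w hw => h w (hts hw) (hφ.truth hw)

theorem truth_neg : truth M w φ.neg ↔ ¬ truth M w φ := by
  simp only [truth, support_neg, Set.mem_singleton_iff, forall_eq]

theorem truth_or : truth M w (φ.or ψ) ↔ truth M w φ ∨ truth M w ψ := by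
  have h_and : truth M w (.and φ.neg ψ.neg) ↔ truth M w φ.neg ∧ truth M w ψ.neg := Iff.rfl
  rw [Form.or, truth_neg, h_and, truth_neg, truth_neg, or_iff_not_and_not]

theorem truth_dia : truth M w φ.dia ↔ ∃ t ∈ M.Nb w, support M φ t := by
  have h_yields : truth M w (.yields φ .bot) ↔ ∀ t ∈ M.Nb w, ¬ support M φ t := by
    simp only [truth, support, Set.mem_singleton_iff, forall_eq]
    exact forall₂_congr fun t ht => imp_congr_right fun _ =>
      iff_false_intro (M.nb_nonempty w t ht).ne_empty
  rw [Form.dia, truth_neg, h_yields]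
  simp only [not_forall, not_not, exists_prop]

namespace TruthConditional

theorem atom (p : P) : TruthConditional (.atom p) := fun M s => by
  simp only [truth, support, Set.mem_singleton_iff, forall_eq]

theorem bot : TruthConditional (.bot : Form P) := fun M s => by
  simp only [truth, support, Set.singleton_ne_empty, imp_false]
  exact Set.eq_empty_iff_forall_notMem

theorem and (hφ : TruthConditional φ) (hψ : TruthConditional ψ) :
    TruthConditional (.and φ ψ) := fun M s =>
  (and_congr (hφ M s) (hψ M s)).trans forall₂_and.symm

theorem impl (hψ : TruthConditional ψ) : TruthConditional (.impl φ ψ) := fun M _ =>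
  ⟨fun h _ hw => h.truth hw, fun h t hts hφ => (hψ M t).2 fun w hw =>
    h w (hts hw) {w} subset_rfl (hφ.truth hw)⟩

theorem neg : TruthConditional φ.neg := bot.impl

theorem or : TruthConditional (φ.or ψ) := neg

theorem dia : TruthConditional φ.dia := neg

theorem equivF (hφ : TruthConditional φ) (hψ : TruthConditional ψ)
    (h : ∀ (M : InModel P) (w : M.W), truth M w φ ↔ truth M w ψ) : EquivF φ ψ := fun M s => by
  simp only [hφ M s, hψ M s, h]

theorem support_impl (hα : TruthConditional α) :
    support M (.impl α φ) s ↔ support M φ {w ∈ s | truth M w α} := by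
  constructor
  · intro h
    exact h _ (Set.sep_subset s _) ((hα M _).2 fun w hw => hw.2)
  · intro h t hts hα_t
    have h_sub : t ⊆ {w ∈ s | truth M w α} := fun w hw => ⟨hts hw, hα_t.truth hw⟩
    exact support_antitone M φ h_sub h

end TruthConditional

namespace EquivF

theorem refl (φ : Form P) : EquivF φ φ := fun _ _ => Iff.rfl

theorem and (hφ : EquivF φ φ') (hψ : EquivF ψ ψ') : EquivF (.and φ ψ) (.and φ' ψ') :=
  fun M s => and_congr (hφ M s) (hψ M s)

theorem impl (hφ : EquivF φ φ') (hψ : EquivF ψ ψ') : EquivF (.impl φ ψ) (.impl φ' ψ') :=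
  fun M _ => forall₂_congr fun t _ => imp_congr (hφ M t) (hψ M t)

theorem dia (h : EquivF φ φ') : EquivF φ.dia φ'.dia :=
  TruthConditional.dia.equivF TruthConditional.dia fun M w => by
    simp only [truth_dia, h M]

theorem and_idisj : EquivF (.and φ (.idisj ψ χ)) (.idisj (.and φ ψ) (.and φ χ)) :=
  fun _ _ => and_or_left

theorem idisj_and : EquivF (.and (.idisj φ ψ) χ) (.idisj (.and φ χ) (.and ψ χ)) :=
  fun _ _ => or_and_right

theorem idisj_impl : EquivF (.impl (.idisj φ ψ) χ) (.and (.impl φ χ) (.impl ψ χ)) :=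
  fun M s => by simp only [support, or_imp, forall_and]

theorem impl_idisj (hα : TruthConditional α) :
    EquivF (.impl α (.idisj φ ψ)) (.idisj (.impl α φ) (.impl α ψ)) :=
  fun _ _ => hα.support_impl.trans (or_congr hα.support_impl hα.support_impl).symm

theorem dia_idisj : EquivF (Form.dia (.idisj φ ψ)) (φ.dia.or ψ.dia) :=
  TruthConditional.dia.equivF TruthConditional.or fun M w => by
    simp only [truth_or, truth_dia, support, and_or_left, exists_or]

end EquivF

theorem DeclDia.inLdia (h : DeclDia α) : InLdia α := by
  induction h with
  | atom p => exact .atom p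
  | bot => exact .bot
  | and _ _ ihα ihβ => exact .and ihα ihβ
  | impl _ _ ihα ihβ => exact .impl ihα ihβ
  | dia hφ => exact .dia hφ

theorem DeclDia.truthConditional (h : DeclDia α) : TruthConditional α := by
  induction h with
  | atom p => exact .atom p
  | bot => exact .bot
  | and _ _ ihα ihβ => exact ihα.and ihβ
  | impl _ _ _ ihβ => exact ihβ.impl
  | dia _ => exact .dia

namespace NoIdisjDia

theorem declDia (h : NoIdisjDia α) : DeclDia α := by
  induction h with
  | atom p => exact .atom p
  | bot => exact .bot
  | and _ _ ihα ihβ => exact .and ihα ihβ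
  | impl _ _ ihα ihβ => exact .impl ihα ihβ
  | dia _ ih => exact .dia ih.inLdia

theorem truthConditional (h : NoIdisjDia α) : TruthConditional α := h.declDia.truthConditional

theorem neg (h : NoIdisjDia φ) : NoIdisjDia φ.neg := .impl h .bot

theorem or (hφ : NoIdisjDia φ) (hψ : NoIdisjDia ψ) : NoIdisjDia (φ.or ψ) :=
  (NoIdisjDia.and hφ.neg hψ.neg).neg

end NoIdisjDia

/-- Formulas that have an inquisitive normal form, i.e. are equivalent to a `⩔` of `⩔`-free formulas
of `L_⟐`. Closure under equivalence is built in, so that the normal forms never have to be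
written down. -/
inductive HasNormalForm : Form P → Prop
  | noIdisj {φ : Form P} : NoIdisjDia φ → HasNormalForm φ
  | idisj {φ ψ : Form P} : HasNormalForm φ → HasNormalForm ψ → HasNormalForm (.idisj φ ψ)
  | congr {φ ψ : Form P} : EquivF φ ψ → HasNormalForm ψ → HasNormalForm φ

namespace HasNormalForm

theorem and (hφ : HasNormalForm φ) (hψ : HasNormalForm ψ) : HasNormalForm (.and φ ψ) := by
  induction hφ with
  | noIdisj hφ =>
    induction hψ with
    | noIdisj hψ => exact .noIdisj (.and hφ hψ)
    | idisj _ _ ih₁ ih₂ => exact .congr .and_idisj (.idisj ih₁ ih₂)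
    | congr h _ ih => exact .congr (.and (.refl _) h) ih
  | idisj _ _ ih₁ ih₂ => exact .congr .idisj_and (.idisj ih₁ ih₂)
  | congr h _ ih => exact .congr (.and h (.refl _)) ih

theorem impl (hφ : HasNormalForm φ) (hψ : HasNormalForm ψ) : HasNormalForm (.impl φ ψ) := by
  induction hφ with
  | noIdisj hφ =>
    induction hψ with
    | noIdisj hψ => exact .noIdisj (.impl hφ hψ)
    | idisj _ _ ih₁ ih₂ => exact .congr (.impl_idisj hφ.truthConditional) (.idisj ih₁ ih₂)
    | congr h _ ih => exact .congr (.impl (.refl _) h) ih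
  | idisj _ _ ih₁ ih₂ => exact .congr .idisj_impl (ih₁.and ih₂)
  | congr h _ ih => exact .congr (.impl h (.refl _)) ih

theorem neg (h : HasNormalForm φ) : HasNormalForm φ.neg := h.impl (.noIdisj .bot)

theorem or (hφ : HasNormalForm φ) (hψ : HasNormalForm ψ) : HasNormalForm (φ.or ψ) :=
  (hφ.neg.and hψ.neg).neg

theorem dia (h : HasNormalForm φ) : HasNormalForm φ.dia := by
  induction h with
  | noIdisj hφ => exact .noIdisj (.dia hφ)
  | idisj _ _ ih₁ ih₂ => exact .congr .dia_idisj (ih₁.or ih₂)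
  | congr h _ ih => exact .congr h.dia ih

theorem exists_noIdisjDia_truth_iff (h : HasNormalForm φ) :
    ∃ β : Form P, NoIdisjDia β ∧ ∀ (M : InModel P) (w : M.W), truth M w φ ↔ truth M w β := by
  induction h with
  | noIdisj hφ => exact ⟨_, hφ, fun _ _ => Iff.rfl⟩
  | idisj _ _ ih₁ ih₂ =>
    obtain ⟨β₁, hβ₁, h₁⟩ := ih₁
    obtain ⟨β₂, hβ₂, h₂⟩ := ih₂
    exact ⟨β₁.or β₂, hβ₁.or hβ₂, fun M w => (or_congr (h₁ M w) (h₂ M w)).trans truth_or.symm⟩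
  | congr h _ ih =>
    obtain ⟨β, hβ, hψβ⟩ := ih
    exact ⟨β, hβ, fun M w => (h M {w}).trans (hψβ M w)⟩

end HasNormalForm

theorem InLdia.hasNormalForm (h : InLdia φ) : HasNormalForm φ := by
  induction h with
  | atom p => exact .noIdisj (.atom p)
  | bot => exact .noIdisj .bot
  | and _ _ ihφ ihψ => exact ihφ.and ihψ
  | impl _ _ ihφ ihψ => exact ihφ.impl ihψ
  | idisj _ _ ihφ ihψ => exact .idisj ihφ ihψ
  | dia _ ih => exact ih.dia

theorem declDia_equiv_idisj_free_general (hφ : InLdia φ) (hφ_tc : TruthConditional φ) :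
    ∃ β : Form P, NoIdisjDia β ∧ EquivF φ β :=
  have ⟨β, hβ, h⟩ := hφ.hasNormalForm.exists_noIdisjDia_truth_iff
  ⟨β, hβ, hφ_tc.equivF hβ.truthConditional h⟩

/-- every declarative of `L_⟐` is equivalent to a `⩔`-free formula
of `L_⟐`. -/
theorem declDia_equiv_idisj_free {P : Type} (α : Form P) (hα : DeclDia α) :
    ∃ β : Form P, NoIdisjDia β ∧ EquivF α β :=
  declDia_equiv_idisj_free_general hα.inLdia hα.truthConditional
end

section
/- (Bisimulation invariance) If two world-pointed in-models satisfy M,w ∼ M',w', then they make true exactly the same formulas of L_⟹; and if two state-pointed in-models satisfy M,s ∼ M',s', then they support exactly the same formulas of L_⟹. -/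
/-- Modal depth. -/
def md {P : Type} : Form P → ℕ
  | .atom _ => 0
  | .bot => 0
  | .and φ ψ => max (md φ) (md ψ)
  | .impl φ ψ => max (md φ) (md ψ)
  | .idisj φ ψ => max (md φ) (md ψ)
  | .yields φ ψ => max (md φ) (md ψ) + 1

/-- Egli-Milner lifting of a relation between worlds to states. -/
def EM {P : Type} {M M' : InModel P} (Z : M.W → M'.W → Prop)
    (s : Set M.W) (s' : Set M'.W) : Prop :=
  (∀ w ∈ s, ∃ w' ∈ s', Z w w') ∧ (∀ w' ∈ s', ∃ w ∈ s, Z w w')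

/-- `Z` is an `n`-bisimulation between `M` and `M'` (indices `i ≤ n`). -/
def IsNBisim {P : Type} (M M' : InModel P) (n : ℕ)
    (Z : ℕ → M.W → M'.W → Prop) : Prop :=
  ∀ i ≤ n, ∀ w w', Z i w w' →
    (∀ p : P, M.V w p = M'.V w' p) ∧
    (∀ j : ℕ, i = j + 1 →
      (∀ s ∈ M.Nb w, ∃ s' ∈ M'.Nb w', EM (Z j) s s') ∧
      (∀ s' ∈ M'.Nb w', ∃ s ∈ M.Nb w, EM (Z j) s s'))

/-- `n`-bisimilarity of world-pointed models. -/
def NBisimW {P : Type} (n : ℕ) (M : InModel P) (w : M.W)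
    (M' : InModel P) (w' : M'.W) : Prop :=
  ∃ Z, IsNBisim M M' n Z ∧ Z n w w'

/-- `n`-bisimilarity of state-pointed models. -/
def NBisimS {P : Type} (n : ℕ) (M : InModel P) (s : Set M.W)
    (M' : InModel P) (s' : Set M'.W) : Prop :=
  ∃ Z, IsNBisim M M' n Z ∧ EM (Z n) s s'

/-- `Z` is a bisimulation between `M` and `M'`. -/
def IsBisim {P : Type} (M M' : InModel P) (Z : M.W → M'.W → Prop) : Prop :=
  (∃ w w', Z w w') ∧
  ∀ w w', Z w w' →
    (∀ p : P, M.V w p = M'.V w' p) ∧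
    (∀ s ∈ M.Nb w, ∃ s' ∈ M'.Nb w', EM Z s s') ∧
    (∀ s' ∈ M'.Nb w', ∃ s ∈ M.Nb w, EM Z s s')

/-- Bisimilarity of world-pointed models. -/
def BisimW {P : Type} (M : InModel P) (w : M.W)
    (M' : InModel P) (w' : M'.W) : Prop :=
  ∃ Z, IsBisim M M' Z ∧ Z w w'

/-- Bisimilarity of state-pointed models. -/
def BisimS {P : Type} (M : InModel P) (s : Set M.W)
    (M' : InModel P) (s' : Set M'.W) : Prop :=
  ∃ Z, IsBisim M M' Z ∧ EM Z s s'

/-!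
The converse of a bisimulation is a bisimulation, so it is enough to transport support in one
direction along the Egli-Milner lifting of an arbitrary bisimulation, by induction on the formula.
The converse is needed inside the induction too: an antecedent occurs negatively, hence is
transported backwards. For `→`, every substate of `s'` has to be matched with a substate of `s`,
and its preimage in `s` serves; for `⟹`, the back condition provides the matching neighborhood.
-/

section EgliMilner

variable {P : Type} {M M' : InModel P} {Z : M.W → M'.W → Prop} {s : Set M.W} {s' t' : Set M'.W}

theorem EM.symm (h : EM Z s s') : EM (flip Z) s' s :=
  And.symm h

theorem EM.eq_empty (h : EM Z s s') (hs : s = ∅) : s' = ∅ := by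
  subst hs
  refine Set.eq_empty_of_forall_notMem fun w' hw' ↦ ?_
  obtain ⟨w, hw, -⟩ := h.2 w' hw'
  exact hw

theorem EM.exists_subset (h : EM Z s s') (ht' : t' ⊆ s') : ∃ t ⊆ s, EM Z t t' := by
  refine ⟨{w ∈ s | ∃ w' ∈ t', Z w w'}, Set.sep_subset _ _, fun w hw ↦ hw.2, fun w' hw' ↦ ?_⟩
  obtain ⟨w, hw, hww'⟩ := h.2 w' (ht' hw')
  exact ⟨w, ⟨hw, w', hw', hww'⟩, hww'⟩

theorem EM_singleton {w : M.W} {w' : M'.W} : EM Z {w} {w'} ↔ Z w w' := by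
  simp [EM]

end EgliMilner

section Bisimulation

variable {P : Type} {M M' : InModel P} {Z : M.W → M'.W → Prop} {s : Set M.W} {s' : Set M'.W}
  {w : M.W} {w' : M'.W}

theorem IsBisim.valuation_eq (hZ : IsBisim M M' Z) (h : Z w w') (p : P) : M.V w p = M'.V w' p :=
  (hZ.2 w w' h).1 p

theorem IsBisim.exists_nb_EM (hZ : IsBisim M M' Z) (h : Z w w') (hs' : s' ∈ M'.Nb w') :
    ∃ s ∈ M.Nb w, EM Z s s' :=
  (hZ.2 w w' h).2.2 s' hs'

theorem IsBisim.symm (hZ : IsBisim M M' Z) : IsBisim M' M (flip Z) := by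
  obtain ⟨⟨w, w', h⟩, hZ⟩ := hZ
  refine ⟨⟨w', w, h⟩, fun v' v hv ↦ ?_⟩
  obtain ⟨hval, forth, back⟩ := hZ v v' hv
  refine ⟨fun p ↦ (hval p).symm, fun t' ht' ↦ ?_, fun t ht ↦ ?_⟩
  · obtain ⟨t, ht, htt'⟩ := back t' ht'
    exact ⟨t, ht, htt'.symm⟩
  · obtain ⟨t', ht', htt'⟩ := forth t ht
    exact ⟨t', ht', htt'.symm⟩

theorem IsBisim.support_of_EM (hZ : IsBisim M M' Z) (h : EM Z s s') {φ : Form P}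
    (hsupp : support M φ s) : support M' φ s' := by
  induction φ generalizing M M' with
  | atom p =>
    intro w' hw'
    obtain ⟨w, hw, hww'⟩ := h.2 w' hw'
    exact (hZ.valuation_eq hww' p).symm.trans (hsupp w hw)
  | bot => exact h.eq_empty hsupp
  | and φ ψ ihφ ihψ => exact hsupp.imp (ihφ hZ h) (ihψ hZ h)
  | idisj φ ψ ihφ ihψ => exact hsupp.imp (ihφ hZ h) (ihψ hZ h)
  | impl φ ψ ihφ ihψ =>
    intro t' ht' hφt'
    obtain ⟨t, ht, htt'⟩ := h.exists_subset ht'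
    have hφt : support M φ t := ihφ hZ.symm htt'.symm hφt'
    exact ihψ hZ htt' (hsupp t ht hφt)
  | yields φ ψ ihφ ihψ =>
    intro w' hw' t' ht' hφt'
    obtain ⟨w, hw, hww'⟩ := h.2 w' hw'
    obtain ⟨t, ht, htt'⟩ := hZ.exists_nb_EM hww' ht'
    have hφt : support M φ t := ihφ hZ.symm htt'.symm hφt'
    exact ihψ hZ htt' (hsupp w hw t ht hφt)

theorem BisimS.support_iff (h : BisimS M s M' s') (φ : Form P) :
    support M φ s ↔ support M' φ s' := by
  obtain ⟨Z, hZ, hs⟩ := h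
  exact ⟨hZ.support_of_EM hs, hZ.symm.support_of_EM hs.symm⟩

theorem bisimS_singleton : BisimS M {w} M' {w'} ↔ BisimW M w M' w' := by
  simp only [BisimS, BisimW, EM_singleton]

theorem BisimW.truth_iff (h : BisimW M w M' w') (φ : Form P) : truth M w φ ↔ truth M' w' φ :=
  (bisimS_singleton.2 h).support_iff φ

end Bisimulation

/-- bisimulation invariance of `InqML_⟹`. -/
theorem bisim_invariance {P : Type} :
    (∀ (M M' : InModel P) (w : M.W) (w' : M'.W), BisimW M w M' w' →
      ∀ φ : Form P, truth M w φ ↔ truth M' w' φ) ∧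
    (∀ (M M' : InModel P) (s : Set M.W) (s' : Set M'.W), BisimS M s M' s' →
      ∀ φ : Form P, support M φ s ↔ support M' φ s') :=
  ⟨fun _ _ _ _ h φ ↦ h.truth_iff φ, fun _ _ _ _ h φ ↦ h.support_iff φ⟩
end

section
/- (n-modal equivalence implies n-bisimilarity) Assume the set P of atoms is finite and let n ∈ ℕ. If two world-pointed in-models ⟨M,w⟩ and ⟨M',w'⟩ make true the same formulas of L_⟹ of modal depth at most n, then M,w ∼ₙ M',w'. If two state-pointed in-models ⟨M,s⟩ and ⟨M',s'⟩ support the same formulas of L_⟹ of modal depth at most n, then M,s ∼ₙ M',s'. -/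
/-!
Assign to each world its `n`-type: its valuation, together with, when `n > 0`, the collection of the
sets of `(n - 1)`-types realized by its neighborhoods. Sharing the `n`-type is an `n`-bisimulation,
and over finitely many atoms there are finitely many `n`-types. The point is that each of them
is expressible at depth `n`. A nonempty state realizes exactly the set `R` of types iff it supports
"all types lie in `R`" but not `⩔_{τ ∈ R}` "all types lie in `R \ {τ}`"; hence the failure of `⟹`
between these two formulas says that some neighborhood realizes exactly `R`.
-/

section Types

variable {P : Type}

/-- The `n`-types over the atoms `P`, which classify worlds up to `n`-bisimilarity. -/
def WorldType (P : Type) : ℕ → Type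
  | 0 => P → Bool
  | n + 1 => (P → Bool) × Set (Set (WorldType P n))

instance WorldType.instFinite [Finite P] : ∀ n, Finite (WorldType P n)
  | 0 => inferInstanceAs (Finite (P → Bool))
  | n + 1 =>
    have : Finite (WorldType P n) := WorldType.instFinite n
    inferInstanceAs (Finite ((P → Bool) × Set (Set (WorldType P n))))

/-- The `n`-type of a world: its valuation and, at positive depth, the sets of types realized by its
neighborhoods. -/
def worldType (M : InModel P) : (n : ℕ) → M.W → WorldType P n
  | 0, w => M.V w
  | n + 1, w => (M.V w, (fun t => worldType M n '' t) '' M.Nb w)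

variable {M M' : InModel P} {n : ℕ}

theorem image_eq_image_iff_forall_exists {α β γ : Type*} {f : α → γ} {g : β → γ} {s : Set α}
    {t : Set β} :
    f '' s = g '' t ↔ (∀ a ∈ s, ∃ b ∈ t, f a = g b) ∧ ∀ b ∈ t, ∃ a ∈ s, f a = g b := by
  rw [Set.Subset.antisymm_iff, Set.image_subset_iff, Set.image_subset_iff]
  simp only [Set.subset_def, Set.mem_preimage, Set.mem_image, eq_comm]

theorem em_eq_iff_image_eq {α : Type*} {f : M.W → α} {g : M'.W → α} {s : Set M.W}
    {s' : Set M'.W} : EM (fun w w' => f w = g w') s s' ↔ f '' s = g '' s' :=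
  image_eq_image_iff_forall_exists.symm

theorem V_eq_of_worldType_eq {w : M.W} {w' : M'.W} (h : worldType M n w = worldType M' n w') :
    M.V w = M'.V w' := by
  cases n with
  | zero => exact h
  | succ n => exact congrArg Prod.fst h

theorem isNBisim_worldType_eq (M M' : InModel P) (n : ℕ) :
    IsNBisim M M' n fun i w w' => worldType M i w = worldType M' i w' := by
  refine fun i _ w w' h => ⟨congrFun (V_eq_of_worldType_eq h), ?_⟩
  rintro j rfl
  have realized_eq : (fun t => worldType M j '' t) '' M.Nb w =
      (fun t => worldType M' j '' t) '' M'.Nb w' := congrArg Prod.snd h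
  simp only [em_eq_iff_image_eq]
  exact image_eq_image_iff_forall_exists.mp realized_eq

theorem nBisimS_of_image_worldType_eq {s : Set M.W} {s' : Set M'.W}
    (h : worldType M n '' s = worldType M' n '' s') : NBisimS n M s M' s' :=
  ⟨_, isNBisim_worldType_eq M M' n, em_eq_iff_image_eq.mpr h⟩

theorem nBisimS_singleton_iff {w : M.W} {w' : M'.W} :
    NBisimS n M {w} M' {w'} ↔ NBisimW n M w M' w' := by
  simp [NBisimS, NBisimW, EM]

end Types

section Definability

variable {P : Type} {n : ℕ}

/-- A property of states is `n`-definable if it is support of some formula of modal depth at most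
`n`, uniformly in the model. -/
def StateDefinable (n : ℕ) (B : (M : InModel P) → Set M.W → Prop) : Prop :=
  ∃ φ : Form P, md φ ≤ n ∧ ∀ M s, support M φ s ↔ B M s

/-- A property of worlds is `n`-definable if it is truth of some truth-conditional formula of modal
depth at most `n`, uniformly in the model. -/
def WorldDefinable (n : ℕ) (A : (M : InModel P) → M.W → Prop) : Prop :=
  StateDefinable n fun M s => ∀ w ∈ s, A M w

namespace StateDefinable

variable {B C : (M : InModel P) → Set M.W → Prop}

theorem congr (hB : StateDefinable n B) (h : ∀ M s, B M s ↔ C M s) : StateDefinable n C := by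
  simpa only [StateDefinable, h] using hB

theorem eq_empty : StateDefinable n fun (M : InModel P) (s : Set M.W) => s = ∅ :=
  ⟨.bot, Nat.zero_le n, fun _ _ => Iff.rfl⟩

theorem and (hB : StateDefinable n B) (hC : StateDefinable n C) :
    StateDefinable n fun M s => B M s ∧ C M s := by
  obtain ⟨φ, hφ, hφB⟩ := hB
  obtain ⟨ψ, hψ, hψC⟩ := hC
  exact ⟨.and φ ψ, max_le hφ hψ, fun M s => and_congr (hφB M s) (hψC M s)⟩

theorem or (hB : StateDefinable n B) (hC : StateDefinable n C) :
    StateDefinable n fun M s => B M s ∨ C M s := by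
  obtain ⟨φ, hφ, hφB⟩ := hB
  obtain ⟨ψ, hψ, hψC⟩ := hC
  exact ⟨.idisj φ ψ, max_le hφ hψ, fun M s => or_congr (hφB M s) (hψC M s)⟩

theorem forall_subset_imp (hB : StateDefinable n B) (hC : StateDefinable n C) :
    StateDefinable n fun M s => ∀ t ⊆ s, B M t → C M t := by
  obtain ⟨φ, hφ, hφB⟩ := hB
  obtain ⟨ψ, hψ, hψC⟩ := hC
  exact ⟨.impl φ ψ, max_le hφ hψ, fun M s =>
    forall₂_congr fun t _ => imp_congr (hφB M t) (hψC M t)⟩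

-- The disjunct `s = ∅` cannot be dropped: the empty state supports every formula.
theorem eq_empty_or_exists_mem {ι : Type*} {S : Set ι} (hS : S.Finite)
    {B : ι → (M : InModel P) → Set M.W → Prop} (h : ∀ i ∈ S, StateDefinable n (B i)) :
    StateDefinable n fun M s => s = ∅ ∨ ∃ i ∈ S, B i M s := by
  induction S, hS using Set.Finite.induction_on with
  | empty => exact eq_empty.congr (by simp)
  | @insert i S _ _ ih =>
    rw [Set.forall_mem_insert] at h
    refine (h.1.or (ih h.2)).congr fun M s => ?_
    rw [Set.exists_mem_insert, or_left_comm]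

end StateDefinable

namespace WorldDefinable

theorem forall_nbhd_imp {B C : (M : InModel P) → Set M.W → Prop} (hB : StateDefinable n B)
    (hC : StateDefinable n C) :
    WorldDefinable (n + 1) fun M w => ∀ t ∈ M.Nb w, B M t → C M t := by
  obtain ⟨φ, hφ, hφB⟩ := hB
  obtain ⟨ψ, hψ, hψC⟩ := hC
  exact ⟨.yields φ ψ, Nat.succ_le_succ (max_le hφ hψ), fun M s =>
    forall₄_congr fun w _ t _ => imp_congr (hφB M t) (hψC M t)⟩

variable {A A' : (M : InModel P) → M.W → Prop}

theorem congr (hA : WorldDefinable n A) (h : ∀ M w, A M w ↔ A' M w) : WorldDefinable n A' := by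
  simpa only [WorldDefinable, h] using hA

theorem atom (p : P) : WorldDefinable n fun (M : InModel P) w => M.V w p = true :=
  ⟨.atom p, Nat.zero_le n, fun _ _ => Iff.rfl⟩

theorem false : WorldDefinable n fun (M : InModel P) (_ : M.W) => False :=
  StateDefinable.eq_empty.congr fun _ _ => Set.eq_empty_iff_forall_notMem

theorem and (hA : WorldDefinable n A) (hA' : WorldDefinable n A') :
    WorldDefinable n fun M w => A M w ∧ A' M w :=
  (StateDefinable.and hA hA').congr fun _ _ => forall₂_and.symm

theorem not (hA : WorldDefinable n A) : WorldDefinable n fun M w => ¬ A M w := by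
  refine (StateDefinable.forall_subset_imp hA .eq_empty).congr fun M s => ⟨fun h w hw hAw => ?_, ?_⟩
  · exact Set.singleton_ne_empty w <| h {w} (Set.singleton_subset_iff.mpr hw) (by simpa using hAw)
  · exact fun h t hts hAt =>
      Set.eq_empty_of_forall_notMem fun w hw => h w (hts hw) (hAt w hw)

theorem iff_const (hA : WorldDefinable n A) (c : Prop) :
    WorldDefinable n fun M w => A M w ↔ c := by
  by_cases hc : c
  · simpa only [hc, iff_true] using hA
  · simpa only [hc, iff_false] using hA.not

section Finite

variable {ι : Type*} {A : ι → (M : InModel P) → M.W → Prop}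

theorem forall_mem {S : Set ι} (hS : S.Finite) (h : ∀ i ∈ S, WorldDefinable n (A i)) :
    WorldDefinable n fun M w => ∀ i ∈ S, A i M w := by
  induction S, hS using Set.Finite.induction_on with
  | empty => exact false.not.congr (by simp)
  | @insert i S _ _ ih =>
    rw [Set.forall_mem_insert] at h
    exact (h.1.and (ih h.2)).congr fun M w => by rw [Set.forall_mem_insert]

theorem forall_of_finite [Finite ι] (h : ∀ i, WorldDefinable n (A i)) :
    WorldDefinable n fun M w => ∀ i, A i M w :=
  (forall_mem Set.finite_univ fun i _ => h i).congr (by simp)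

end Finite

theorem V_eq [Finite P] (v : P → Bool) : WorldDefinable n fun (M : InModel P) w => M.V w = v :=
  (forall_of_finite fun p => (atom p).iff_const (v p = true)).congr fun M w => by
    rw [funext_iff]
    exact forall_congr' fun p => Bool.eq_iff_iff.symm

section Classifier

variable {α : Type*} [Finite α] {f : (M : InModel P) → M.W → α}

theorem mem_of_eq (hf : ∀ a, WorldDefinable n fun M w => f M w = a) (S : Set α) :
    WorldDefinable n fun M w => f M w ∈ S :=
  (forall_mem S.toFinite fun a _ => (hf a).not).not.congr (by simp)

theorem image_subset (hf : ∀ a, WorldDefinable n fun M w => f M w = a) (S : Set α) :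
    StateDefinable n fun M s => f M '' s ⊆ S :=
  StateDefinable.congr (mem_of_eq hf S) fun _ _ => Set.image_subset_iff.symm

theorem eq_empty_or_image_ssubset (hf : ∀ a, WorldDefinable n fun M w => f M w = a)
    (S : Set α) : StateDefinable n fun M s => s = ∅ ∨ f M '' s ⊂ S := by
  simp only [Set.ssubset_iff_sdiff_singleton]
  exact .eq_empty_or_exists_mem S.toFinite fun a _ => image_subset hf (S \ {a})

theorem exists_nbhd_image_eq (hf : ∀ a, WorldDefinable n fun M w => f M w = a) (S : Set α) :
    WorldDefinable (n + 1) fun M w => ∃ t ∈ M.Nb w, f M '' t = S := by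
  refine (forall_nbhd_imp (image_subset hf S) (eq_empty_or_image_ssubset hf S)).not.congr
    fun M w => ?_
  push Not
  refine exists_congr fun t => and_congr_right fun ht => ?_
  rw [and_iff_right (M.nb_nonempty w t ht)]
  exact eq_iff_le_not_lt.symm

end Classifier

theorem worldType_eq [Finite P] (τ : WorldType P n) :
    WorldDefinable n fun M w => worldType M n w = τ := by
  induction n with
  | zero => exact V_eq τ
  | succ n ih =>
    obtain ⟨v, N⟩ := τ
    have realized_eq : WorldDefinable (n + 1) fun (M : InModel P) w =>
        (fun t => worldType M n '' t) '' M.Nb w = N :=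
      (forall_of_finite fun R => (exists_nbhd_image_eq ih R).iff_const (R ∈ N)).congr
        fun M w => Set.ext_iff.symm
    exact ((V_eq v).and realized_eq).congr fun M w => Prod.mk_inj.symm

end WorldDefinable

variable {M M' : InModel P} {s : Set M.W} {s' : Set M'.W}

theorem image_worldType_subset_of_support_imp [Finite P]
    (h : ∀ φ : Form P, md φ ≤ n → support M φ s → support M' φ s') :
    worldType M' n '' s' ⊆ worldType M n '' s := by
  obtain ⟨φ, hφ, support_iff⟩ :=
    WorldDefinable.image_subset WorldDefinable.worldType_eq (worldType M n '' s)
  exact (support_iff M' s').mp <| h φ hφ <| (support_iff M s).mpr Set.Subset.rfl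

theorem nBisimS_of_support_iff [Finite P]
    (h : ∀ φ : Form P, md φ ≤ n → (support M φ s ↔ support M' φ s')) : NBisimS n M s M' s' :=
  nBisimS_of_image_worldType_eq <| Set.Subset.antisymm
    (image_worldType_subset_of_support_imp fun φ hφ => (h φ hφ).mpr)
    (image_worldType_subset_of_support_imp fun φ hφ => (h φ hφ).mp)

end Definability

/-- over a finite set of atoms, `n`-modal equivalence implies
`n`-bisimilarity, for worlds and for states. -/
theorem modal_equiv_implies_nbisim {P : Type} [Fintype P] (n : ℕ) :
    (∀ (M M' : InModel P) (w : M.W) (w' : M'.W),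
      (∀ φ : Form P, md φ ≤ n → (truth M w φ ↔ truth M' w' φ)) →
      NBisimW n M w M' w') ∧
    (∀ (M M' : InModel P) (s : Set M.W) (s' : Set M'.W),
      (∀ φ : Form P, md φ ≤ n → (support M φ s ↔ support M' φ s')) →
      NBisimS n M s M' s') := by
  exact ⟨fun _ _ _ _ h => nBisimS_singleton_iff.mp (nBisimS_of_support_iff h),
    fun _ _ _ _ h => nBisimS_of_support_iff h⟩
end
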